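/- Let F be a field and let a₀, a₁, a₂, f₀, f₁, f₂ be nonzero elements of F. Define S₀ : (a₀,a₁,a₂,f₀,f₁,f₂) ↦ (a₀^{-1}, a₀a₁, a₀a₂, f₀, f₁(a₀+f₀)/(1+a₀f₀), f₂(1+a₀f₀)/(a₀+f₀)) and S₁ : (a₀,a₁,a₂,f₀,f₁,f₂) ↦ (a₀a₁, a₁^{-1}, a₁a₂, f₀(1+a₁f₁)/(a₁+f₁), f₁, f₂(a₁+f₁)/(1+a₁f₁)). Then, whenever all intermediate denominators are nonzero, (S₀ ∘ S₁) ∘ (S₀ ∘ S₁) ∘ (S₀ ∘ S₁) is the identity map on such tuples. (This is the braid relation (s₀s₁)³ = 1 of the birational representation of W̃((A₂+A₁)^{(1)}) on the f-variables.) -/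

import Mathlib

/-- The birational action of the generator `s₀` of `W̃((A₂+A₁)⁽¹⁾)` on
`(a₀, a₁, a₂, f₀, f₁, f₂)`. -/
def weylS0 {F : Type*} [Field F] :
    F × F × F × F × F × F → F × F × F × F × F × F
  | (a0, a1, a2, f0, f1, f2) =>
    (a0⁻¹, a0 * a1, a0 * a2, f0,
      f1 * (a0 + f0) / (1 + a0 * f0),
      f2 * (1 + a0 * f0) / (a0 + f0))

/-- The birational action of the generator `s₁` of `W̃((A₂+A₁)⁽¹⁾)` on
`(a₀, a₁, a₂, f₀, f₁, f₂)`. -/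
def weylS1 {F : Type*} [Field F] :
    F × F × F × F × F × F → F × F × F × F × F × F
  | (a0, a1, a2, f0, f1, f2) =>
    (a0 * a1, a1⁻¹, a1 * a2,
      f0 * (1 + a1 * f1) / (a1 + f1), f1,
      f2 * (a1 + f1) / (1 + a1 * f1))

/-- Nonvanishing of the denominators appearing in `s₀`. -/
def denS0 {F : Type*} [Field F] (x : F × F × F × F × F × F) : Prop :=
  1 + x.1 * x.2.2.2.1 ≠ 0 ∧ x.1 + x.2.2.2.1 ≠ 0

/-- Nonvanishing of the denominators appearing in `s₁`. -/
def denS1 {F : Type*} [Field F] (x : F × F × F × F × F × F) : Prop :=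
  1 + x.2.1 * x.2.2.2.2.1 ≠ 0 ∧ x.2.1 + x.2.2.2.2.1 ≠ 0

/-- the braid relation `(s₀s₁)³ = 1` of the birational
representation of `W̃((A₂+A₁)⁽¹⁾)` on the `f`-variables. -/
theorem weylS0S1_braid
    (F : Type*) [Field F] (a0 a1 a2 f0 f1 f2 : F)
    (ha0 : a0 ≠ 0) (ha1 : a1 ≠ 0) (ha2 : a2 ≠ 0)
    (hf0 : f0 ≠ 0) (hf1 : f1 ≠ 0) (hf2 : f2 ≠ 0)
    (h1 : denS1 (a0, a1, a2, f0, f1, f2))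
    (h2 : denS0 (weylS1 (a0, a1, a2, f0, f1, f2)))
    (h3 : denS1 (weylS0 (weylS1 (a0, a1, a2, f0, f1, f2))))
    (h4 : denS0 (weylS1 (weylS0 (weylS1 (a0, a1, a2, f0, f1, f2)))))
    (h5 : denS1 (weylS0 (weylS1 (weylS0 (weylS1 (a0, a1, a2, f0, f1, f2))))))
    (h6 : denS0 (weylS1 (weylS0 (weylS1 (weylS0 (weylS1 (a0, a1, a2, f0, f1, f2))))))) :
    weylS0 (weylS1 (weylS0 (weylS1 (weylS0 (weylS1 (a0, a1, a2, f0, f1, f2)))))) =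
      (a0, a1, a2, f0, f1, f2) := by
  obtain ⟨hA, hB⟩ := h1
  simp only at hA hB
  obtain ⟨A, eA⟩ : ∃ A, A = 1 + a1 * f1 := ⟨_, rfl⟩
  obtain ⟨B, eB⟩ : ∃ B, B = a1 + f1 := ⟨_, rfl⟩
  obtain ⟨P, eP⟩ : ∃ P, P = B + a0 * a1 * f0 * A := ⟨_, rfl⟩
  obtain ⟨Q, eQ⟩ : ∃ Q, Q = a0 * a1 * B + f0 * A := ⟨_, rfl⟩
  obtain ⟨R, eR⟩ : ∃ R, R = 1 + a0 ^ 2 * a1 * f1 + a0 * f0 * A := ⟨_, rfl⟩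
  obtain ⟨T, eT⟩ : ∃ T, T = a0 * B + f0 * (a0 ^ 2 * a1 + f1) := ⟨_, rfl⟩
  obtain ⟨C, eC⟩ : ∃ C, C = 1 + a0 * f0 := ⟨_, rfl⟩
  obtain ⟨D, eD⟩ : ∃ D, D = a0 + f0 := ⟨_, rfl⟩
  rw [← eA] at hA
  rw [← eB] at hB
  -- first application of `s₁`
  have s1 : weylS1 (a0, a1, a2, f0, f1, f2)
      = (a0 * a1, a1⁻¹, a1 * a2, f0 * A / B, f1, f2 * B / A) := by
    simp only [weylS1, eA, eB]
  rw [s1] at h2 h3 h4 h5 h6 ⊢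
  obtain ⟨hP, hQ⟩ := h2
  simp only at hP hQ
  have kP : 1 + a0 * a1 * (f0 * A / B) = P / B := by
    rw [eP]; field_simp
  have kQ : a0 * a1 + f0 * A / B = Q / B := by
    rw [eQ]; field_simp
  rw [kP] at hP
  rw [kQ] at hQ
  have hP : P ≠ 0 := fun h => hP (by simp [h])
  have hQ : Q ≠ 0 := fun h => hQ (by simp [h])
  have s2 : weylS0 (a0 * a1, a1⁻¹, a1 * a2, f0 * A / B, f1, f2 * B / A)
      = ((a0 * a1)⁻¹, a0, a0 * a1 ^ 2 * a2, f0 * A / B, f1 * Q / P,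
          f2 * B * P / (A * Q)) := by
    simp only [weylS0, kP, kQ, Prod.mk.injEq]
    refine ⟨trivial, ?_, ?_, trivial, ?_, ?_⟩ <;> field_simp
  rw [s2] at h3 h4 h5 h6 ⊢
  obtain ⟨hR, hT⟩ := h3
  simp only at hR hT
  have kR : 1 + a0 * (f1 * Q / P) = B * R / P := by
    field_simp; rw [eP, eQ, eR, eA, eB]; ring
  have kT : a0 + f1 * Q / P = A * T / P := by
    field_simp; rw [eP, eQ, eT, eA, eB]; ring
  rw [kR] at hR
  rw [kT] at hT
  have hR : R ≠ 0 := fun h => hR (by simp [h])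
  have hT : T ≠ 0 := fun h => hT (by simp [h])
  have s3 : weylS1 ((a0 * a1)⁻¹, a0, a0 * a1 ^ 2 * a2, f0 * A / B, f1 * Q / P,
          f2 * B * P / (A * Q))
      = (a1⁻¹, a0⁻¹, a0 ^ 2 * a1 ^ 2 * a2, f0 * R / T, f1 * Q / P,
          f2 * P * T / (Q * R)) := by
    simp only [weylS1, kR, kT, Prod.mk.injEq]
    refine ⟨?_, trivial, ?_, ?_, trivial, ?_⟩ <;> field_simp
  rw [s3] at h4 h5 h6 ⊢
  obtain ⟨hC, hD⟩ := h4
  simp only at hC hD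
  have kC : 1 + a1⁻¹ * (f0 * R / T) = Q * C / (a1 * T) := by
    field_simp; rw [eQ, eT, eR, eC, eA, eB]; ring
  have kD : a1⁻¹ + f0 * R / T = P * D / (a1 * T) := by
    field_simp; rw [eP, eT, eR, eD, eA, eB]; ring
  rw [kC] at hC
  rw [kD] at hD
  have hC : C ≠ 0 := fun h => hC (by simp [h])
  have hD : D ≠ 0 := fun h => hD (by simp [h])
  have s4 : weylS0 (a1⁻¹, a0⁻¹, a0 ^ 2 * a1 ^ 2 * a2, f0 * R / T, f1 * Q / P,
          f2 * P * T / (Q * R))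
      = (a1, (a0 * a1)⁻¹, a0 ^ 2 * a1 * a2, f0 * R / T, f1 * D / C,
          f2 * T * C / (R * D)) := by
    simp only [weylS0, kC, kD, Prod.mk.injEq]
    refine ⟨?_, ?_, ?_, trivial, ?_, ?_⟩ <;> field_simp
  rw [s4]
  have k5 : 1 + (a0 * a1)⁻¹ * (f1 * D / C) = T / (a0 * a1 * C) := by
    field_simp; rw [eT, eC, eD, eB]; ring
  have k6 : (a0 * a1)⁻¹ + f1 * D / C = R / (a0 * a1 * C) * 1 := by
    field_simp; rw [eR, eC, eD, eA]; ring
  have s5 : weylS1 (a1, (a0 * a1)⁻¹, a0 ^ 2 * a1 * a2, f0 * R / T, f1 * D / C,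
          f2 * T * C / (R * D))
      = (a0⁻¹, a0 * a1, a0 * a2, f0, f1 * D / C, f2 * C / D) := by
    simp only [weylS1, k5, k6, Prod.mk.injEq]
    refine ⟨?_, ?_, ?_, ?_, trivial, ?_⟩ <;> field_simp
  rw [s5]
  have k7 : 1 + a0⁻¹ * f0 = D / a0 := by
    field_simp; rw [eD]
  have k8 : a0⁻¹ + f0 = C / a0 := by
    field_simp; rw [eC]
  simp only [weylS0, k7, k8, Prod.mk.injEq]
  refine ⟨?_, ?_, ?_, trivial, ?_, ?_⟩ <;> field_simp
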